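/- arXiv:1205.1458 — 4 statements merged into one kernel-verified Lean document; each statement's English description precedes it below -/
import Mathlib

section
/- Let L be a field of characteristic different from 2, let E be a finite étale commutative L-algebra, and let σ be an L-linear algebra involution of E. Let h be a nondegenerate L-bilinear form on E satisfying h(a·x, y) = h(x, σ(a)·y) for all a, x, y ∈ E. Then there exists an invertible element b ∈ E such that h = φ_b, i.e. h(x,y) = Tr_{E/L}(x·b·σ(y)) for all x, y ∈ E; moreover, if h is symmetric then σ(b) = b, and if h is skew-symmetric then σ(b) = −b. -/
/-!
The trace form of a finite étale algebra is nondegenerate, because it is the orthogonal sum of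
the trace forms of the separable field factors. Hence the functional `x ↦ h x 1` is
`x ↦ Tr (x * b)` for some `b`, and moving `σ y` across `h` turns this into `h = φ_b`. A zero
divisor `b` would put a nonzero element in the radical of `h`, so `b` is a unit. Finally,
`Tr ∘ σ = Tr` shows that transposing `φ_b` gives `φ_(σ b)`, and `b` is determined by `φ_b`.
-/

open Algebra

section TraceForm

variable {R : Type*} [CommRing R]

theorem trace_pi_single {ι : Type*} [Finite ι] [DecidableEq ι] (A : ι → Type*)
    [∀ i, CommRing (A i)] [∀ i, Algebra R (A i)] [∀ i, Module.Free R (A i)]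
    [∀ i, Module.Finite R (A i)] (i : ι) (a : A i) :
    trace R (∀ i, A i) (Pi.single i a) = trace R (A i) a := by
  have lmul_single : lmul R (∀ i, A i) (Pi.single i a) =
      (LinearMap.single R A i ∘ₗ lmul R (A i) a) ∘ₗ LinearMap.proj i := by
    refine LinearMap.ext fun x ↦ ?_
    simp [← Pi.single_mul_left]
  have proj_comp_single :
      LinearMap.proj i ∘ₗ (LinearMap.single R A i ∘ₗ lmul R (A i) a) = lmul R (A i) a := by
    refine LinearMap.ext fun x ↦ ?_
    simp
  rw [trace_apply, trace_apply, lmul_single, LinearMap.trace_comp_comm', proj_comp_single]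

theorem traceForm_separatingLeft_iff_nondegenerate {A : Type*} [CommRing A] [Algebra R A] :
    (traceForm R A).SeparatingLeft ↔ (traceForm R A).Nondegenerate :=
  (LinearMap.IsRefl.nondegenerate_iff_separatingLeft (B := traceForm R A)
    (traceForm_isSymm R).isRefl).symm

theorem traceForm_pi_nondegenerate {ι : Type*} [Finite ι] (A : ι → Type*)
    [∀ i, CommRing (A i)] [∀ i, Algebra R (A i)] [∀ i, Module.Free R (A i)]
    [∀ i, Module.Finite R (A i)] (hA : ∀ i, (traceForm R (A i)).Nondegenerate) :
    (traceForm R (∀ i, A i)).Nondegenerate := by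
  classical
  refine traceForm_separatingLeft_iff_nondegenerate.mp fun x hx ↦ funext fun i ↦ ?_
  refine (hA i).1 (x i) fun a ↦ ?_
  calc traceForm R (A i) (x i) a
      = traceForm R (∀ i, A i) x (Pi.single i a) := by
        rw [traceForm_apply, traceForm_apply, ← Pi.single_mul_right, trace_pi_single]
    _ = 0 := hx _

theorem traceForm_nondegenerate_of_algEquiv {A B : Type*} [CommRing A] [Algebra R A]
    [CommRing B] [Algebra R B] (e : A ≃ₐ[R] B) (hB : (traceForm R B).Nondegenerate) :
    (traceForm R A).Nondegenerate := by
  refine traceForm_separatingLeft_iff_nondegenerate.mp fun x hx ↦ ?_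
  rw [← map_eq_zero_iff e e.injective]
  refine hB.1 (e x) fun b ↦ ?_
  calc traceForm R B (e x) b
      = traceForm R A x (e.symm b) := by
        rw [traceForm_apply, traceForm_apply, ← trace_eq_of_algEquiv e (x * e.symm b),
          map_mul e, e.apply_symm_apply]
    _ = 0 := hx _

end TraceForm

theorem traceForm_nondegenerate_of_etale (L E : Type*) [Field L] [CommRing E] [Algebra L E]
    [Etale L E] : (traceForm L E).Nondegenerate := by
  obtain ⟨ι, _, A, _, _, e, hA⟩ := (Etale.iff_exists_algEquiv_prod L E).mp inferInstance
  have finite_factor (i) : Module.Finite L (A i) := (hA i).1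
  have separable_factor (i) : Algebra.IsSeparable L (A i) := (hA i).2
  exact traceForm_nondegenerate_of_algEquiv e
    (traceForm_pi_nondegenerate A fun i ↦ traceForm_nondegenerate L (A i))

section TwistedTraceForm

variable {R E : Type*} [CommRing R] [CommRing E] [Algebra R E] (σ : E →ₐ[R] E) (b : E)

/-- The bilinear form `φ_b : (x, y) ↦ Tr (x * b * σ y)` on a commutative algebra with an
endomorphism `σ`. -/
noncomputable def twistedTraceForm : LinearMap.BilinForm R E :=
  (traceForm R E).compl₁₂ (LinearMap.mulRight R b) σ.toLinearMap

@[simp]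
theorem twistedTraceForm_apply (x y : E) : twistedTraceForm σ b x y = trace R E (x * b * σ y) :=
  rfl

theorem twistedTraceForm_neg : twistedTraceForm σ (-b) = -twistedTraceForm σ b := by
  ext x y
  simp

theorem twistedTraceForm_injective (hE : (traceForm R E).Nondegenerate) :
    Function.Injective (twistedTraceForm σ) := by
  intro b c hbc
  rw [← sub_eq_zero]
  refine hE.2 (b - c) fun x ↦ ?_
  have trace_mul_eq : trace R E (x * b) = trace R E (x * c) := by
    simpa using LinearMap.congr_fun₂ hbc x 1
  rw [traceForm_apply, mul_sub, map_sub, trace_mul_eq, sub_self]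

variable {σ}

theorem trace_apply_of_involutive (hσ : Function.Involutive σ) (x : E) :
    trace R E (σ x) = trace R E x :=
  trace_eq_of_algEquiv (AlgEquiv.ofAlgHom σ σ (AlgHom.ext hσ) (AlgHom.ext hσ)) x

theorem twistedTraceForm_flip (hσ : Function.Involutive σ) :
    (twistedTraceForm σ b).flip = twistedTraceForm σ (σ b) := by
  ext x y
  calc trace R E (y * b * σ x)
      = trace R E (σ (y * b * σ x)) := (trace_apply_of_involutive hσ _).symm
    _ = trace R E (x * σ b * σ y) := by
      rw [map_mul σ, map_mul σ, hσ x, mul_rotate, mul_comm (σ b)]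

variable {b}

theorem eq_twistedTraceForm (hσ : Function.Involutive σ) {h : LinearMap.BilinForm R E}
    (hassoc : ∀ a x y, h (a * x) y = h x (σ a * y)) (hb : ∀ x, h x 1 = trace R E (x * b)) :
    h = twistedTraceForm σ b := by
  ext x y
  calc h x y
      = h x (σ (σ y) * 1) := by rw [hσ, mul_one]
    _ = h (σ y * x) 1 := (hassoc _ _ _).symm
    _ = trace R E (σ y * x * b) := hb _
    _ = trace R E (x * b * σ y) := by rw [mul_assoc, mul_comm]

theorem isUnit_of_twistedTraceForm_separatingLeft [IsArtinianRing E]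
    (hsep : (twistedTraceForm σ b).SeparatingLeft) : IsUnit b := by
  refine IsArtinianRing.isUnit_of_mem_nonZeroDivisors
    (mem_nonZeroDivisors_iff_right.mpr fun x hx ↦ hsep x fun y ↦ ?_)
  rw [twistedTraceForm_apply, hx, zero_mul, map_zero]

theorem apply_eq_self_of_twistedTraceForm_symm (hσ : Function.Involutive σ)
    (hE : (traceForm R E).Nondegenerate)
    (hsymm : (twistedTraceForm σ b).flip = twistedTraceForm σ b) : σ b = b :=
  twistedTraceForm_injective σ hE <| (twistedTraceForm_flip b hσ).symm.trans hsymm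

theorem apply_eq_neg_of_twistedTraceForm_skew (hσ : Function.Involutive σ)
    (hE : (traceForm R E).Nondegenerate)
    (hskew : (twistedTraceForm σ b).flip = -twistedTraceForm σ b) : σ b = -b :=
  twistedTraceForm_injective σ hE <| by
    rw [← twistedTraceForm_flip b hσ, hskew, twistedTraceForm_neg]

end TwistedTraceForm

theorem statement2_general {L E : Type*} [Field L] [CommRing E] [Algebra L E] [Etale L E]
    (σ : E →ₐ[L] E) (hσ : ∀ x, σ (σ x) = x)
    (h : E →ₗ[L] E →ₗ[L] L)
    (hnd : ∀ x : E, (∀ y : E, h x y = 0) → x = 0)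
    (hassoc : ∀ a x y : E, h (a * x) y = h x (σ a * y)) :
    ∃ b : E, IsUnit b ∧
      (∀ x y : E, h x y = trace L E (x * b * σ y)) ∧
      ((∀ x y : E, h x y = h y x) → σ b = b) ∧
      ((∀ x y : E, h x y = - h y x) → σ b = -b) := by
  have : FiniteDimensional L E := FormallyUnramified.finite_of_free L E
  have : IsArtinianRing E := .of_finite L E
  have hE : (traceForm L E).Nondegenerate := traceForm_nondegenerate_of_etale L E
  obtain ⟨b, hb⟩ := (LinearMap.BilinForm.toDual _ hE).surjective (h.flip 1)
  have apply_one (x : E) : h x 1 = trace L E (x * b) := by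
    rw [mul_comm]
    exact (LinearMap.congr_fun hb x).symm
  obtain rfl : h = twistedTraceForm σ b := eq_twistedTraceForm hσ hassoc apply_one
  refine ⟨b, isUnit_of_twistedTraceForm_separatingLeft hnd, twistedTraceForm_apply σ b, ?_, ?_⟩
  · exact fun hsymm ↦ apply_eq_self_of_twistedTraceForm_symm hσ hE <|
      LinearMap.ext₂ fun x y ↦ hsymm y x
  · exact fun hskew ↦ apply_eq_neg_of_twistedTraceForm_skew hσ hE <|
      LinearMap.ext₂ fun x y ↦ hskew y x

/-- Let `L` be a field of characteristic `≠ 2`, `E` a finite étale commutative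
`L`-algebra with involution `σ`, and `h` a nondegenerate `L`-bilinear form on `E` satisfying
`h (a * x) y = h x (σ a * y)`.  Then `h = φ_b` for some invertible `b ∈ E`, i.e.
`h x y = Tr_{E/L} (x * b * σ y)`; moreover if `h` is symmetric then `σ b = b`, and if `h` is
skew-symmetric then `σ b = -b`. -/
theorem statement2 {L E : Type u} [Field L] [CommRing E] [Algebra L E]
    [FiniteDimensional L E] [Algebra.Etale L E]
    (hchar : ringChar L ≠ 2)
    (σ : E →ₐ[L] E) (hσ : ∀ x, σ (σ x) = x)
    (h : E →ₗ[L] E →ₗ[L] L)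
    (hnd : ∀ x : E, (∀ y : E, h x y = 0) → x = 0)
    (hassoc : ∀ a x y : E, h (a * x) y = h x (σ a * y)) :
    ∃ b : E, IsUnit b ∧
      (∀ x y : E, h x y = Algebra.trace L E (x * b * σ y)) ∧
      ((∀ x y : E, h x y = h y x) → σ b = b) ∧
      ((∀ x y : E, h x y = - h y x) → σ b = -b) :=
  statement2_general σ hσ h hnd hassoc
end

section
/- Let K be an infinite field of characteristic different from 2, let ℓ ≥ 1, let E be a finite étale commutative K-algebra of K-dimension 2ℓ, and let σ be a K-linear algebra involution of E whose fixed-point subalgebra E^σ has K-dimension ℓ. Then there exists an element e ∈ E with σ(e) = −e such that 1, e, e², …, e^{2ℓ−1} form a K-basis of E (equivalently, E = K[e]). -/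
universe u

/-!
Let `Ω` be a separable closure of `K`. An element `e` generates the étale algebra `E` as soon as the
`finrank K E` homomorphisms `E →ₐ[K] Ω` take pairwise distinct values at `e`. Since `K` is infinite,
such an `e` exists in the `-1`-eigenspace of `σ` provided that distinct homomorphisms differ there.

If `φ` and `ψ` agree on all `x - σ x`, then `φ + ψ ∘ σ = ψ + φ ∘ σ`, so Dedekind's independence of
characters gives `φ = ψ` unless both are `σ`-invariant. In the same way, the restriction of
homomorphisms to `E^σ` has fibres contained in `{φ, φ ∘ σ}`; counting gives
`dim E + #{invariant homomorphisms} ≤ 2 * dim E^σ`, which leaves room for at most one invariant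
homomorphism.
-/

open Module Polynomial TensorProduct Function

theorem natCard_add_natCard_fixedPoints_le_two_mul_natCard {α β : Type*} [Finite α] [Finite β]
    (r : α → β) (τ : α → α) (h : ∀ a b, r a = r b → a = b ∨ a = τ b) :
    Nat.card α + Nat.card (fixedPoints τ) ≤ 2 * Nat.card β := by
  classical
  have := Fintype.ofFinite α
  have := Fintype.ofFinite β
  let fixed : Finset α := {a | IsFixedPt τ a}
  let moved : Finset α := {a | ¬ IsFixedPt τ a}
  have eq_of_fixed {a c : α} (hc : c ∈ fixed) (hac : r a = r c) : a = c := by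
    have hτc : τ c = c := (Finset.mem_filter.1 hc).2
    simpa [hτc] using h a c hac
  have card_image_fixed : (fixed.image r).card = fixed.card :=
    Finset.card_image_of_injOn fun _ _ _ hc hac ↦ eq_of_fixed hc hac
  have card_moved_le : moved.card ≤ 2 * (moved.image r).card :=
    Finset.card_le_mul_card_image moved 2 fun b hb ↦ by
      obtain ⟨c, -, rfl⟩ := Finset.mem_image.1 hb
      refine (Finset.card_le_card (t := {c, τ c}) fun a ha ↦ ?_).trans Finset.card_le_two
      simpa using h a c (Finset.mem_filter.1 ha).2
  have disjoint_images : Disjoint (fixed.image r) (moved.image r) := by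
    simp only [Finset.disjoint_left, Finset.mem_image, not_exists, not_and]
    rintro _ ⟨c, hc, rfl⟩ a ha hac
    exact (Finset.mem_filter.1 ha).2 (eq_of_fixed hc hac ▸ (Finset.mem_filter.1 hc).2)
  have card_images_le : (fixed.image r).card + (moved.image r).card ≤ Nat.card β := by
    rw [← Finset.card_union_of_disjoint disjoint_images, Nat.card_eq_fintype_card]
    exact Finset.card_le_univ _
  have card_fixed_add_card_moved : fixed.card + moved.card = Nat.card α := by
    rw [Finset.card_filter_add_card_filter_not, Finset.card_univ, Nat.card_eq_fintype_card]
  have card_fixedPoints : Nat.card (fixedPoints τ) = fixed.card :=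
    Nat.subtype_card fixed fun _ ↦ Finset.mem_filter_univ _
  lia

theorem exists_mem_injective_apply {K M N ι : Type*} [Field K] [Infinite K] [AddCommGroup M]
    [Module K M] [AddCommGroup N] [Module K N] [Finite ι] (f : ι → M →ₗ[K] N) (V : Submodule K M)
    (h : ∀ i j, (∀ x ∈ V, f i x = f j x) → i = j) :
    ∃ x ∈ V, Injective fun i ↦ f i x := by
  let coincidence (p : {p : ι × ι // p.1 ≠ p.2}) : Submodule K V :=
    LinearMap.eqLocus ((f p.1.1).domRestrict V) ((f p.1.2).domRestrict V)
  have coincidence_ne_top p : coincidence p ≠ ⊤ := fun htop ↦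
    p.2 <| h _ _ fun x hx ↦ (htop ▸ Submodule.mem_top : (⟨x, hx⟩ : V) ∈ coincidence p)
  obtain ⟨x, hx⟩ := Submodule.exists_forall_notMem_of_forall_ne_top coincidence coincidence_ne_top
  exact ⟨x, x.2, fun i j hij ↦ by_contra fun hne ↦ hx ⟨(i, j), hne⟩ hij⟩

theorem eq_and_eq_or_eq_and_eq_of_forall_add_eq_add {G L F : Type*} [MulOneClass G] [CommRing L]
    [IsDomain L] [NeZero (2 : L)] [FunLike F G L] [MonoidHomClass F G L] {φ ψ χ ω : F}
    (h : ∀ x, φ x + ψ x = χ x + ω x) : (φ = χ ∧ ψ = ω) ∨ (φ = ω ∧ ψ = χ) := by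
  have independent : LinearIndependent L fun f : F ↦ (f : G → L) :=
    (linearIndependent_monoidHom G L).comp (fun f : F ↦ (f : G →* L))
      fun f g hfg ↦ DFunLike.ext f g (DFunLike.congr_fun (F := G →* L) hfg)
  have single_eq : Finsupp.single φ (1 : L) + Finsupp.single ψ 1 =
      Finsupp.single χ 1 + Finsupp.single ω 1 := by
    apply independent
    ext x
    simpa using h x
  simpa [Finsupp.single_add_single_eq_single_add_single, one_add_one_eq_two, two_ne_zero]
    using single_eq

section Involution

variable {K E Ω : Type*} [CommRing K] [CommRing E] [Algebra K E] [CommRing Ω] [IsDomain Ω]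
  [NeZero (2 : Ω)] [Algebra K Ω]

/-- The subalgebra `E^σ` of elements fixed by an endomorphism `σ` of `E`. -/
abbrev fixedSubalgebra (σ : E →ₐ[K] E) : Subalgebra K E :=
  AlgHom.equalizer σ (AlgHom.id K E)

theorem toSubmodule_fixedSubalgebra (σ : E →ₐ[K] E) :
    (fixedSubalgebra σ).toSubmodule = LinearMap.ker (σ.toLinearMap - LinearMap.id) := by
  ext x
  simp [AlgHom.mem_equalizer, sub_eq_zero]

variable {σ : E →ₐ[K] E} (hσ : Involutive σ) {φ ψ : E →ₐ[K] Ω}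

include hσ

theorem eq_or_eq_comp_of_comp_val_fixedSubalgebra_eq
    (h : φ.comp (fixedSubalgebra σ).val = ψ.comp (fixedSubalgebra σ).val) :
    φ = ψ ∨ φ = ψ.comp σ := by
  have eq_on_trace (x : E) : φ x + φ.comp σ x = ψ x + ψ.comp σ x := by
    have hx : x + σ x ∈ fixedSubalgebra σ := by simp [AlgHom.mem_equalizer, hσ x, add_comm]
    simpa using DFunLike.congr_fun h ⟨_, hx⟩
  exact (eq_and_eq_or_eq_and_eq_of_forall_add_eq_add eq_on_trace).imp And.left And.left

theorem eq_or_isFixedPt_comp_of_eq_on_skew (h : ∀ x, σ x = -x → φ x = ψ x) :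
    φ = ψ ∨ IsFixedPt (AlgHom.comp · σ) φ ∧ IsFixedPt (AlgHom.comp · σ) ψ := by
  have eq_on_antitrace (x : E) : φ x + ψ.comp σ x = ψ x + φ.comp σ x := by
    have := h (x - σ x) (by simp [hσ x])
    simp only [map_sub, AlgHom.comp_apply] at this ⊢
    linear_combination this
  exact (eq_and_eq_or_eq_and_eq_of_forall_add_eq_add eq_on_antitrace).imp And.left
    fun ⟨hφ, hψ⟩ ↦ ⟨hφ.symm, hψ⟩

end Involution

section Etale

variable (K E Ω : Type*) [Field K] [CommRing E] [Algebra K E] [Algebra.Etale K E] [Field Ω]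

theorem finrank_le_natCard_algHom_self [IsSepClosed K] :
    finrank K E ≤ Nat.card (E →ₐ[K] K) := by
  classical
  have := Algebra.FormallyUnramified.finite_of_free K E
  have : IsArtinianRing E := isArtinian_of_tower K inferInstance
  have := Fintype.ofFinite (PrimeSpectrum E)
  let split : E ≃ₐ[K] (PrimeSpectrum E → K) := Algebra.FormallyEtale.equivPiOfIsSepClosed K E
  let eval (p : PrimeSpectrum E) : E →ₐ[K] K := (Pi.evalAlgHom K (fun _ ↦ K) p).comp split
  have eval_injective : Injective eval := fun p q hpq ↦ by
    by_contra hne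
    simpa [eval, Ne.symm hne] using DFunLike.congr_fun hpq (split.symm (Pi.single p 1))
  calc
    finrank K E = Nat.card (PrimeSpectrum E) := by
      rw [split.toLinearEquiv.finrank_eq, finrank_fintype_fun_eq_card, Nat.card_eq_fintype_card]
    _ ≤ Nat.card (E →ₐ[K] K) := Nat.card_le_card_of_injective eval eval_injective

theorem natCard_algHom_eq_finrank_of_etale [Algebra K Ω] [IsSepClosed Ω] :
    Nat.card (E →ₐ[K] Ω) = finrank K E := by
  have := Algebra.FormallyUnramified.finite_of_free K E
  refine (card_algHom_le_finrank K E Ω).antisymm ?_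
  calc
    finrank K E = finrank Ω (Ω ⊗[K] E) := finrank_baseChange.symm
    _ ≤ Nat.card (Ω ⊗[K] E →ₐ[Ω] Ω) := finrank_le_natCard_algHom_self Ω (Ω ⊗[K] E)
    _ = Nat.card (E →ₐ[K] Ω) := Nat.card_congr (AlgHom.liftEquiv K Ω E Ω).symm

end Etale

theorem natCard_algHom_le_natDegree_minpoly {K A Ω : Type*} [CommRing K] [Ring A] [Algebra K A]
    [CommRing Ω] [IsDomain Ω] [Algebra K Ω] {x : A} (hx : IsIntegral K x)
    (hinj : Injective fun φ : A →ₐ[K] Ω ↦ φ x) :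
    Nat.card (A →ₐ[K] Ω) ≤ (minpoly K x).natDegree := by
  have apply_mem_rootSet (φ : A →ₐ[K] Ω) : φ x ∈ (minpoly K x).rootSet Ω :=
    mem_rootSet'.2 ⟨((minpoly.monic hx).map _).ne_zero, by simp [aeval_algHom_apply]⟩
  calc
    Nat.card (A →ₐ[K] Ω) ≤ Nat.card ((minpoly K x).rootSet Ω) :=
      Nat.card_le_card_of_injective (fun φ ↦ ⟨φ x, apply_mem_rootSet φ⟩)
        fun _ _ h ↦ hinj (Subtype.ext_iff.1 h)
    _ ≤ (minpoly K x).natDegree := ncard_rootSet_le _ _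

theorem exists_basis_eq_pow_of_finrank_le_natDegree_minpoly {K A : Type*} [Field K] [Ring A]
    [Algebra K A] [FiniteDimensional K A] {x : A} (hx : finrank K A ≤ (minpoly K x).natDegree) :
    ∃ B : Basis (Fin (finrank K A)) K A, ∀ i, B i = x ^ (i : ℕ) := by
  have independent : LinearIndependent K fun i : Fin (finrank K A) ↦ x ^ (i : ℕ) :=
    (linearIndependent_pow x).comp (Fin.castLE hx) (Fin.castLE_injective hx)
  exact ⟨Basis.mk independent (independent.span_eq_top_of_card_eq_finrank' (by simp)).ge, by simp⟩

theorem subsingleton_fixedPoints_comp {K E Ω : Type*} [Field K] [CommRing E] [Algebra K E]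
    [Algebra.Etale K E] [Field Ω] [NeZero (2 : Ω)] [Algebra K Ω] [IsSepClosed Ω] {σ : E →ₐ[K] E}
    (hσ : Involutive σ) (hfix : 2 * finrank K (fixedSubalgebra σ) ≤ finrank K E + 1) :
    (fixedPoints fun φ : E →ₐ[K] Ω ↦ φ.comp σ).Subsingleton := by
  have := Algebra.FormallyUnramified.finite_of_free K E
  have count := natCard_add_natCard_fixedPoints_le_two_mul_natCard
    (fun φ : E →ₐ[K] Ω ↦ φ.comp (fixedSubalgebra σ).val) (AlgHom.comp · σ)
    fun _ _ ↦ eq_or_eq_comp_of_comp_val_fixedSubalgebra_eq hσ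
  rw [natCard_algHom_eq_finrank_of_etale] at count
  have := card_algHom_le_finrank K (fixedSubalgebra σ) Ω
  exact Set.ncard_le_one_iff_subsingleton.1 (show Nat.card _ ≤ 1 by lia)

theorem statement4_general {K E : Type*} [Field K] [Infinite K] [CommRing E] [Algebra K E]
    [Algebra.Etale K E] (hchar : ringChar K ≠ 2) {n : ℕ} (hdim : finrank K E = n)
    (σ : E →ₐ[K] E) (hσ : Involutive σ)
    (hfix : 2 * finrank K (LinearMap.ker (σ.toLinearMap - LinearMap.id)) ≤ n + 1) :
    ∃ e : E, σ e = -e ∧ ∃ B : Basis (Fin n) K E, ∀ i : Fin n, B i = e ^ (i : ℕ) := by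
  subst hdim
  let Ω := SeparableClosure K
  have := Algebra.FormallyUnramified.finite_of_free K E
  have : NeZero (2 : K) := ⟨Ring.two_ne_zero hchar⟩
  have : NeZero (2 : Ω) :=
    map_ofNat (algebraMap K Ω) 2 ▸ NeZero.of_injective (algebraMap K Ω).injective
  rw [← toSubmodule_fixedSubalgebra] at hfix
  have eq_of_eq_on_skew (φ ψ : E →ₐ[K] Ω) (h : ∀ x, σ x = -x → φ x = ψ x) : φ = ψ :=
    (eq_or_isFixedPt_comp_of_eq_on_skew hσ h).elim id fun ⟨hφ, hψ⟩ ↦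
      subsingleton_fixedPoints_comp hσ hfix hφ hψ
  obtain ⟨e, he, separates⟩ := exists_mem_injective_apply (AlgHom.toLinearMap (A := E) (B := Ω))
    (LinearMap.eqLocus σ.toLinearMap (-LinearMap.id)) eq_of_eq_on_skew
  refine ⟨e, he, exists_basis_eq_pow_of_finrank_le_natDegree_minpoly ?_⟩
  rw [← natCard_algHom_eq_finrank_of_etale K E Ω]
  exact natCard_algHom_le_natDegree_minpoly (Algebra.IsIntegral.isIntegral e) separates

/-- Let `K` be an infinite field of characteristic `≠ 2`, `ℓ ≥ 1`, `E` a finite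
étale commutative `K`-algebra of dimension `2ℓ`, and `σ` a `K`-linear algebra involution of `E`
whose fixed-point subalgebra has dimension `ℓ`.  Then there is `e ∈ E` with `σ e = -e` such that
`1, e, e², …, e^{2ℓ-1}` is a `K`-basis of `E`. -/
theorem statement4 {K E : Type u} [Field K] [Infinite K] [CommRing E] [Algebra K E]
    [FiniteDimensional K E] [Algebra.Etale K E]
    (hchar : ringChar K ≠ 2)
    (ℓ : ℕ) (hℓ : 1 ≤ ℓ)
    (hdim : Module.finrank K E = 2 * ℓ)
    (σ : E →ₐ[K] E) (hσ : ∀ x, σ (σ x) = x)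
    (hfix : Module.finrank K (LinearMap.ker (σ.toLinearMap - LinearMap.id)) = ℓ) :
    ∃ e : E, σ e = -e ∧
      ∃ B : Module.Basis (Fin (2 * ℓ)) K E, ∀ i : Fin (2 * ℓ), B i = e ^ (i : ℕ) :=
  statement4_general hchar hdim σ hσ (by lia)
end

section
/- Let K be a field of characteristic different from 2, let ℓ ≥ 1, let E be a finite étale commutative K-algebra of K-dimension 2ℓ, and let σ be a K-linear algebra involution of E with dim_K E^σ = ℓ. Then there exists a nondegenerate symmetric K-bilinear form h on E satisfying h(a·x, y) = h(x, σ(a)·y) for all a, x, y ∈ E, and such that h admits a totally isotropic K-subspace of dimension ℓ − 1 (i.e. h has Witt index at least ℓ − 1). -/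
/-!
Every linear functional `s` on `E` with `s ∘ σ = s` gives a symmetric form `(a, b) ↦ s (a * σ b)`
for which `σ` is the adjoint involution, and the form is nondegenerate as soon as `ker s` contains
no nonzero ideal.

Over a finite field any such form will do, for instance the one of the trace: by Chevalley–Warning
a totally isotropic subspace `W` can be enlarged as long as `Wᗮ / W` has dimension at least `3`.

Over an infinite field, call `x` skew if `σ x = -x`. Multiplication by a general skew element embeds
the skew elements into `E^σ`, which has the same dimension, so its image contains `1` and the
element is a unit. Hence two homomorphisms from `E` to an algebraic closure that agree on skew
elements are equal, and a general skew element `x` separates all of them, so it generates `E`; no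
homomorphism `φ` kills it, as otherwise `φ ∘ σ` and `φ` would agree on `x`. Let `t` be the
coefficient of `x ^ (2ℓ - 1)` in the basis of powers of `x`. Then `t ∘ σ = -t`, so `s a = t (x * a)`
is `σ`-invariant, and `1, x, …, x ^ (ℓ - 2)` span a totally isotropic subspace because every
`s (x ^ i * σ (x ^ j))` is up to sign the top coefficient of a power of `x` of exponent at most
`2ℓ - 3`.
-/

open LinearMap (BilinForm)
open Module TensorProduct

section TwistedForm

variable {K E : Type*} [CommRing K] [CommRing E] [Algebra K E]

/-- A linear functional on an algebra whose kernel contains no nonzero ideal; the condition is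
stated for principal ideals, which suffices. -/
def IsFrobeniusForm (s : E →ₗ[K] K) : Prop :=
  ∀ a, (∀ b, s (a * b) = 0) → a = 0

theorem IsFrobeniusForm.comp_mulLeft {s : E →ₗ[K] K} (hs : IsFrobeniusForm s) {x : E}
    (hx : x ∈ nonZeroDivisors E) : IsFrobeniusForm (s ∘ₗ LinearMap.mulLeft K x) := by
  intro a ha
  have hxa : x * a = 0 := hs _ fun b => by simpa [mul_assoc] using ha b
  exact (mul_left_mem_nonZeroDivisors_eq_zero_iff hx).mp hxa

/-- The bilinear form `(a, b) ↦ s (a * σ b)` attached to an algebra endomorphism `σ` and a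
linear functional `s`. -/
def twistedForm (σ : E →ₐ[K] E) (s : E →ₗ[K] K) : BilinForm K E :=
  ((LinearMap.mul K E).compr₂ s).compl₂ σ.toLinearMap

variable {σ : E →ₐ[K] E} {s : E →ₗ[K] K}

@[simp]
theorem twistedForm_apply (a b : E) : twistedForm σ s a b = s (a * σ b) := rfl

theorem twistedForm_mul_left (hσ : Function.Involutive σ) (a x y : E) :
    twistedForm σ s (a * x) y = twistedForm σ s x (σ a * y) := by
  simp only [twistedForm_apply, map_mul, hσ a]
  congr 1
  ring

theorem isSymm_twistedForm (hσ : Function.Involutive σ) (hs : ∀ a, s (σ a) = s a) :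
    (twistedForm σ s).IsSymm where
  eq x y := by
    rw [twistedForm_apply, twistedForm_apply, ← hs, map_mul, hσ y, mul_comm]

theorem separatingLeft_twistedForm (hσ : Function.Involutive σ) (hs : IsFrobeniusForm s) :
    (twistedForm σ s).SeparatingLeft :=
  fun a ha => hs a fun b => by simpa [hσ b] using ha (σ b)

end TwistedForm

theorem sup_span_singleton_le_orthogonal {R M : Type*} [CommRing R] [AddCommGroup M] [Module R M]
    {B : BilinForm R M} (hB : B.IsRefl) {W : Submodule R M} (hW : W ≤ B.orthogonal W) {v : M}
    (hvW : v ∈ B.orthogonal W) (hv : B v v = 0) :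
    W ⊔ Submodule.span R {v} ≤ B.orthogonal (W ⊔ Submodule.span R {v}) := by
  intro x hx y hy
  obtain ⟨w, hw, _, hc, rfl⟩ := Submodule.mem_sup.mp hx
  obtain ⟨w', hw', _, hc', rfl⟩ := Submodule.mem_sup.mp hy
  obtain ⟨c, rfl⟩ := Submodule.mem_span_singleton.mp hc
  obtain ⟨c', rfl⟩ := Submodule.mem_span_singleton.mp hc'
  have hww : B w' w = 0 := hW hw w' hw'
  have hwv : B w' v = 0 := hvW w' hw'
  have hvw : B v w = 0 := hB _ _ (hvW w hw)
  simp [hww, hwv, hvw, hv]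

section FiniteField

variable {K : Type*} [Field K] [Finite K]

theorem exists_ne_zero_eval_eq_zero {ι : Type*} [Fintype ι] {f : MvPolynomial ι K}
    (hdeg : f.totalDegree < Fintype.card ι) (hf : MvPolynomial.eval 0 f = 0) :
    ∃ x ≠ 0, MvPolynomial.eval x f = 0 := by
  classical
  have := Fintype.ofFinite K
  by_contra! hne
  have hcard : Fintype.card {x // MvPolynomial.eval x f = 0} = 1 :=
    Fintype.card_eq_one_iff.mpr
      ⟨⟨0, hf⟩, fun x => Subtype.ext (by_contra fun hx => hne x hx x.2)⟩
  have hdvd := char_dvd_card_solutions (ringChar K) hdeg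
  rw [hcard] at hdvd
  exact (CharP.char_is_prime K (ringChar K)).one_lt.ne' (Nat.dvd_one.mp hdvd)

open Matrix in
theorem exists_ne_zero_dotProduct_mulVec_eq_zero {ι : Type*} [Fintype ι] (hι : 2 < Fintype.card ι)
    (M : Matrix ι ι K) : ∃ x ≠ 0, x ⬝ᵥ M *ᵥ x = 0 := by
  let f : MvPolynomial ι K := ∑ i, MvPolynomial.X i * M.toMvPolynomial i
  have hf (x : ι → K) : MvPolynomial.eval x f = x ⬝ᵥ M *ᵥ x := by
    simp [f, dotProduct, Matrix.toMvPolynomial_eval_eq_apply]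
  have hdeg : f.totalDegree ≤ 2 :=
    MvPolynomial.totalDegree_finsetSum_le fun i _ =>
      (MvPolynomial.totalDegree_mul _ _).trans
        (add_le_add (MvPolynomial.totalDegree_X i).le (M.toMvPolynomial_totalDegree_le i))
  obtain ⟨x, hx, hfx⟩ := exists_ne_zero_eval_eq_zero (hdeg.trans_lt hι)
    ((hf 0).trans (by simp))
  exact ⟨x, hx, hf x ▸ hfx⟩

variable {V : Type*} [AddCommGroup V] [Module K V] [FiniteDimensional K V]

theorem exists_ne_zero_apply_self_eq_zero (B : BilinForm K V) (hV : 2 < finrank K V) :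
    ∃ v ≠ 0, B v v = 0 := by
  let b := finBasis K V
  obtain ⟨x, hx, hBx⟩ := exists_ne_zero_dotProduct_mulVec_eq_zero (by simpa using hV)
    (LinearMap.BilinForm.toMatrix b B)
  refine ⟨b.equivFun.symm x, b.equivFun.symm.map_ne_zero_iff.mpr hx, ?_⟩
  rwa [LinearMap.BilinForm.dotProduct_toMatrix_mulVec] at hBx

theorem exists_finrank_eq_succ_le_orthogonal {B : BilinForm K V} (hB : B.IsRefl)
    {W : Submodule K V} (hW : W ≤ B.orthogonal W) (hdim : 2 * finrank K W + 2 < finrank K V) :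
    ∃ W' : Submodule K V, finrank K W' = finrank K W + 1 ∧ W' ≤ B.orthogonal W' := by
  obtain ⟨D, hWD, hsup⟩ := IsModularLattice.exists_disjoint_and_sup_eq hW
  have hD : 2 < finrank K D := by
    have hperp := B.finrank_add_finrank_orthogonal hB W
    have hadd := Submodule.finrank_sup_add_finrank_inf_eq W D
    rw [hsup, hWD.eq_bot, finrank_bot] at hadd
    omega
  obtain ⟨⟨v, hvD⟩, hv, hBv⟩ := exists_ne_zero_apply_self_eq_zero (B.restrict D) hD
  have hv : v ≠ 0 := by simpa using hv
  have hvW : v ∈ B.orthogonal W := (le_sup_right.trans_eq hsup) hvD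
  have hWv : Disjoint W (Submodule.span K {v}) :=
    hWD.mono_right ((Submodule.span_singleton_le_iff_mem v D).mpr hvD)
  refine ⟨W ⊔ Submodule.span K {v}, ?_, sup_span_singleton_le_orthogonal hB hW hvW hBv⟩
  have hadd := Submodule.finrank_sup_add_finrank_inf_eq W (Submodule.span K {v})
  rwa [hWv.eq_bot, finrank_bot, finrank_span_singleton hv] at hadd

theorem exists_finrank_eq_le_orthogonal {B : BilinForm K V} (hB : B.IsRefl) {m : ℕ}
    (hm : 2 * m < finrank K V) :
    ∃ W : Submodule K V, finrank K W = m ∧ W ≤ B.orthogonal W := by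
  induction m with
  | zero => exact ⟨⊥, finrank_bot K V, bot_le⟩
  | succ m ih =>
    obtain ⟨W, rfl, hW⟩ := ih (by omega)
    exact exists_finrank_eq_succ_le_orthogonal hB hW (by omega)

end FiniteField

section TopCoeff

variable {K E : Type*} [CommRing K] [CommRing E] [Algebra K E]

theorem map_pow_eq_smul_of_map_eq_neg {σ : E →ₐ[K] E} {x : E} (hx : σ x = -x) (k : ℕ) :
    σ (x ^ k) = (-1 : K) ^ k • x ^ k := by
  rw [map_pow, hx, neg_pow, Algebra.smul_def, map_pow, map_neg, map_one]

theorem finrank_span_gen_pow [Nontrivial K] (pb : PowerBasis K E) {m : ℕ} (hm : m ≤ pb.dim) :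
    finrank K (Submodule.span K (Set.range fun i : Fin m => pb.gen ^ (i : ℕ))) = m := by
  have hli : LinearIndependent K fun i : Fin m => pb.gen ^ (i : ℕ) := by
    simpa only [Function.comp_def, pb.coe_basis, Fin.val_castLE] using
      pb.basis.linearIndependent.comp _ (Fin.castLE_injective hm)
  rw [finrank_span_eq_card hli, Fintype.card_fin]

variable [Nontrivial E]

/-- The coefficient of the highest power of the generator in a power basis. -/
noncomputable def topCoeff (pb : PowerBasis K E) : E →ₗ[K] K :=
  pb.basis.coord ⟨pb.dim - 1, Nat.sub_one_lt pb.dim_ne_zero⟩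

variable (pb : PowerBasis K E)

theorem topCoeff_gen_pow {k : ℕ} (hk : k < pb.dim) :
    topCoeff pb (pb.gen ^ k) = if k = pb.dim - 1 then 1 else 0 := by
  rw [topCoeff, Basis.coord_apply, ← pb.basis_eq_pow ⟨k, hk⟩, Basis.repr_self,
    Finsupp.single_apply]
  simp [Fin.ext_iff]

theorem topCoeff_aeval_gen {p : Polynomial K} (hp : p.natDegree < pb.dim) :
    topCoeff pb (Polynomial.aeval pb.gen p) = p.coeff (pb.dim - 1) := by
  have hterm : ∀ k ∈ Finset.range pb.dim, topCoeff pb (p.coeff k • pb.gen ^ k) =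
      if k = pb.dim - 1 then p.coeff k else 0 := fun k hk => by
    rw [map_smul, topCoeff_gen_pow pb (Finset.mem_range.mp hk), smul_ite, smul_zero, smul_eq_mul,
      mul_one]
  rw [Polynomial.aeval_eq_sum_range' hp, map_sum, Finset.sum_congr rfl hterm]
  simp [pb.dim_pos]

/-- Multiplying a nonzero polynomial in the generator by a suitable power of the generator moves
its leading coefficient to the top. -/
theorem isFrobeniusForm_topCoeff : IsFrobeniusForm (topCoeff pb) := by
  intro a ha
  have := Module.nontrivial K E
  obtain ⟨p, hp, rfl⟩ := pb.exists_eq_aeval a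
  by_contra hne
  have hp0 : p ≠ 0 := by rintro rfl; exact hne (map_zero _)
  let k := pb.dim - 1 - p.natDegree
  have hdeg : (p * Polynomial.X ^ k).natDegree < pb.dim := by
    rw [Polynomial.natDegree_mul_X_pow k hp0]
    omega
  have hcoeff : (p * Polynomial.X ^ k).coeff (pb.dim - 1) = p.leadingCoeff := by
    rw [show pb.dim - 1 = p.natDegree + k by omega, Polynomial.coeff_mul_X_pow,
      Polynomial.coeff_natDegree]
  have htop := topCoeff_aeval_gen pb hdeg
  rw [map_mul, ha, hcoeff] at htop
  exact hp0 (Polynomial.leadingCoeff_eq_zero.mp htop.symm)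

variable {pb} {σ : E →ₐ[K] E}

theorem topCoeff_map (hσ : σ pb.gen = -pb.gen) (hdim : Even pb.dim) (a : E) :
    topCoeff pb (σ a) = -topCoeff pb a := by
  suffices topCoeff pb ∘ₗ σ.toLinearMap = -topCoeff pb from LinearMap.congr_fun this a
  refine pb.basis.ext fun i => ?_
  have hodd : Odd (pb.dim - 1) := Nat.Even.sub_odd pb.dim_pos hdim odd_one
  simp only [LinearMap.comp_apply, AlgHom.toLinearMap_apply, LinearMap.neg_apply, pb.basis_eq_pow,
    map_pow_eq_smul_of_map_eq_neg hσ, map_smul, topCoeff_gen_pow pb i.2]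
  split_ifs with hi
  · simp [hi, hodd.neg_one_pow]
  · simp

theorem topCoeff_gen_mul_map (hσ : σ pb.gen = -pb.gen) (hdim : Even pb.dim) (a : E) :
    topCoeff pb (pb.gen * σ a) = topCoeff pb (pb.gen * a) := by
  have hmap := topCoeff_map hσ hdim (pb.gen * a)
  rwa [map_mul, hσ, neg_mul, map_neg, neg_inj] at hmap

theorem span_gen_pow_le_orthogonal (hσ : σ pb.gen = -pb.gen) {m : ℕ} (hm : 2 * m < pb.dim) :
    let W := Submodule.span K (Set.range fun i : Fin m => pb.gen ^ (i : ℕ))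
    W ≤ (twistedForm σ (topCoeff pb ∘ₗ LinearMap.mulLeft K pb.gen)).orthogonal W := by
  intro W x hx y hy
  refine (Submodule.mem_bot K).mp
    (LinearMap.BilinMap.apply_apply_mem_of_mem_span ⊥ _ _ _ ?_ y x hy hx)
  rintro _ ⟨i, rfl⟩ _ ⟨j, rfl⟩
  have hprod : pb.gen * (pb.gen ^ (i : ℕ) * σ (pb.gen ^ (j : ℕ))) =
      (-1 : K) ^ (j : ℕ) • pb.gen ^ (i + j + 1 : ℕ) := by
    rw [map_pow_eq_smul_of_map_eq_neg hσ, mul_smul_comm, mul_smul_comm]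
    ring_nf
  have htop : topCoeff pb (pb.gen ^ (i + j + 1 : ℕ)) = 0 := by
    rw [topCoeff_gen_pow pb (by omega), if_neg (by omega)]
  rw [Submodule.mem_bot, twistedForm_apply, LinearMap.comp_apply, LinearMap.mulLeft_apply, hprod,
    map_smul, htop, smul_zero]

end TopCoeff

theorem trace_fun_eq_sum {R ι : Type*} [CommRing R] [Fintype ι] (f : ι → R) :
    Algebra.trace R (ι → R) f = ∑ i, f i := by
  classical
  simp [Algebra.trace_eq_matrix_trace (Pi.basisFun R ι), Matrix.trace,
    Algebra.leftMulMatrix_eq_repr_mul]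

section GeometricPoints

variable (K E Ω : Type*) [Field K] [CommRing E] [Algebra K E] [Field Ω] [Algebra K Ω]

/-- Evaluation at all geometric points `E →ₐ[K] Ω`, extended `Ω`-linearly. -/
noncomputable def evalGeometricPoints : Ω ⊗[K] E →ₐ[Ω] ((E →ₐ[K] Ω) → Ω) :=
  AlgHom.pi fun φ => Algebra.TensorProduct.lift (Algebra.ofId Ω Ω) φ fun _ _ => .all _ _

variable {K E Ω} in
theorem evalGeometricPoints_one_tmul (a : E) (φ : E →ₐ[K] Ω) :
    evalGeometricPoints K E Ω (1 ⊗ₜ a) φ = φ a := by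
  simp [evalGeometricPoints]

variable [IsSepClosed Ω] [Algebra.Etale K E]

theorem evalGeometricPoints_injective : Function.Injective (evalGeometricPoints K E Ω) := by
  obtain ⟨n, ⟨e⟩⟩ := Algebra.IsFiniteSplit.nonempty_algEquiv_fun Ω (Ω ⊗[K] E)
  refine (injective_iff_map_eq_zero _).mpr fun z hz => e.injective (funext fun i => ?_)
  let coord : Ω ⊗[K] E →ₐ[Ω] Ω := (Pi.evalAlgHom Ω (fun _ => Ω) i).comp e.toAlgHom
  let point : E →ₐ[K] Ω := (coord.restrictScalars K).comp Algebra.TensorProduct.includeRight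
  have hcoord : coord = (Pi.evalAlgHom Ω _ point).comp (evalGeometricPoints K E Ω) := by
    ext a
    simp [evalGeometricPoints_one_tmul, point]
  have hzero : coord z = 0 := by simp [hcoord, hz]
  simpa [coord] using hzero

variable {E} in
theorem eq_zero_of_forall_algHom_apply_eq_zero {a : E} (ha : ∀ φ : E →ₐ[K] Ω, φ a = 0) :
    a = 0 := by
  have hmap : evalGeometricPoints K E Ω (1 ⊗ₜ a) = 0 :=
    funext fun φ => (evalGeometricPoints_one_tmul a φ).trans (ha φ)
  have htmul : (1 : Ω) ⊗ₜ[K] a = 0 :=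
    evalGeometricPoints_injective K E Ω (hmap.trans (map_zero _).symm)
  exact Algebra.TensorProduct.includeRight_injective (B := E) (algebraMap K Ω).injective
    (htmul.trans (map_zero Algebra.TensorProduct.includeRight).symm)

variable [FiniteDimensional K E]

theorem evalGeometricPoints_bijective : Function.Bijective (evalGeometricPoints K E Ω) := by
  have hinj := evalGeometricPoints_injective K E Ω
  have := Fintype.ofFinite (E →ₐ[K] Ω)
  have hle : finrank Ω ((E →ₐ[K] Ω) → Ω) ≤ finrank Ω (Ω ⊗[K] E) := by
    rw [finrank_fintype_fun_eq_card, finrank_baseChange, ← Nat.card_eq_fintype_card]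
    exact card_algHom_le_finrank K E Ω
  have hdim := hle.antisymm' <|
    LinearMap.finrank_le_finrank_of_injective (f := (evalGeometricPoints K E Ω).toLinearMap) hinj
  exact ⟨hinj, (LinearMap.injective_iff_surjective_of_finrank_eq_finrank
    (f := (evalGeometricPoints K E Ω).toLinearMap) hdim).mp hinj⟩

theorem natCard_algHom_eq_finrank : Nat.card (E →ₐ[K] Ω) = finrank K E := by
  have := Fintype.ofFinite (E →ₐ[K] Ω)
  rw [← finrank_baseChange (R := Ω), Nat.card_eq_fintype_card, ← finrank_fintype_fun_eq_card Ω]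
  exact (AlgEquiv.ofBijective _ (evalGeometricPoints_bijective K E Ω)).toLinearEquiv.finrank_eq.symm

variable {E} in
theorem algebraMap_trace_eq_sum_algHom [Fintype (E →ₐ[K] Ω)] (a : E) :
    algebraMap K Ω (Algebra.trace K E a) = ∑ φ : E →ₐ[K] Ω, φ a := by
  let e := AlgEquiv.ofBijective _ (evalGeometricPoints_bijective K E Ω)
  calc algebraMap K Ω (Algebra.trace K E a)
      = Algebra.trace Ω (Ω ⊗[K] E) (1 ⊗ₜ a) := by
        rw [Algebra.trace_apply, Algebra.trace_apply, ← LinearMap.trace_baseChange,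
          Algebra.baseChange_lmul]
    _ = Algebra.trace Ω ((E →ₐ[K] Ω) → Ω) (e (1 ⊗ₜ a)) := (Algebra.trace_eq_of_algEquiv e _).symm
    _ = ∑ φ : E →ₐ[K] Ω, e (1 ⊗ₜ a) φ := trace_fun_eq_sum _
    _ = ∑ φ : E →ₐ[K] Ω, φ a := Fintype.sum_congr _ _ (evalGeometricPoints_one_tmul a)

end GeometricPoints

theorem isFrobeniusForm_trace (K E : Type*) [Field K] [CommRing E] [Algebra K E]
    [FiniteDimensional K E] [Algebra.Etale K E] : IsFrobeniusForm (Algebra.trace K E) := by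
  intro a ha
  let Ω := AlgebraicClosure K
  have : Fintype (E →ₐ[K] Ω) := .ofFinite _
  have hsum : ∑ φ : E →ₐ[K] Ω, φ a • φ.toLinearMap = 0 := by
    ext b
    simpa [ha] using (algebraMap_trace_eq_sum_algHom K Ω (a * b)).symm
  exact eq_zero_of_forall_algHom_apply_eq_zero K Ω
    (Fintype.linearIndependent_iff.mp (linearIndependent_algHom_toLinearMap K E Ω) _ hsum)

section Eigenspaces

variable {R M : Type*} [CommRing R] [AddCommGroup M] [Module R M]

variable (R) in
theorem eq_zero_of_eq_neg_self [Invertible (2 : R)] {x : M} (hx : x = -x) : x = 0 := by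
  have htwo : (2 : R) • x = 0 := by rw [two_smul, ← eq_neg_iff_add_eq_zero, ← hx]
  rw [← invOf_smul_smul (2 : R) x, htwo, smul_zero]

variable {f : End R M}

theorem mem_eigenspace_one {x : M} : x ∈ f.eigenspace 1 ↔ f x = x := by
  rw [End.mem_eigenspace_iff, one_smul]

theorem mem_eigenspace_neg_one {x : M} : x ∈ f.eigenspace (-1) ↔ f x = -x := by
  rw [End.mem_eigenspace_iff, neg_one_smul]

theorem isCompl_eigenspace_of_involutive [Invertible (2 : R)] (hf : Function.Involutive f) :
    IsCompl (f.eigenspace 1) (f.eigenspace (-1)) := by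
  refine IsCompl.of_le (fun x hx => ?_) fun x _ => ?_
  · have hneg : x = -x := (mem_eigenspace_one.mp hx.1).symm.trans (mem_eigenspace_neg_one.mp hx.2)
    exact eq_zero_of_eq_neg_self R hneg
  · have hplus : x + f x ∈ f.eigenspace 1 := mem_eigenspace_one.mpr (by rw [map_add, hf, add_comm])
    have hminus : x - f x ∈ f.eigenspace (-1) :=
      mem_eigenspace_neg_one.mpr (by rw [map_sub, hf, neg_sub])
    have hx : x = ⅟(2 : R) • (x + f x) + ⅟(2 : R) • (x - f x) := by
      rw [← smul_add, add_add_sub_cancel, ← two_smul R x, invOf_smul_smul]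
    exact hx ▸ Submodule.add_mem_sup (Submodule.smul_mem _ _ hplus) (Submodule.smul_mem _ _ hminus)

end Eigenspaces

theorem exists_mem_forall_apply_ne_zero {K V W ι : Type*} [Field K] [Infinite K] [AddCommGroup V]
    [Module K V] [AddCommGroup W] [Module K W] [Finite ι] (p : Submodule K V) (f : ι → V →ₗ[K] W)
    (hf : ∀ i, ∃ x ∈ p, f i x ≠ 0) : ∃ x ∈ p, ∀ i, f i x ≠ 0 := by
  have hker (i : ι) : LinearMap.ker (f i ∘ₗ p.subtype) ≠ ⊤ := by
    obtain ⟨x, hxp, hx⟩ := hf i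
    exact fun htop => hx (LinearMap.congr_fun (LinearMap.ker_eq_top.mp htop) ⟨x, hxp⟩)
  obtain ⟨⟨x, hxp⟩, hx⟩ := Submodule.exists_forall_notMem_of_forall_ne_top _ hker
  exact ⟨x, hxp, hx⟩

section SkewElements

variable {K E : Type*} [CommRing K] [CommRing E] [Algebra K E] {σ : E →ₐ[K] E}

theorem mul_mem_eigenspace_one {a b : E} (ha : a ∈ End.eigenspace σ.toLinearMap (-1))
    (hb : b ∈ End.eigenspace σ.toLinearMap (-1)) : a * b ∈ End.eigenspace σ.toLinearMap 1 := by
  simp_all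

theorem mul_mem_eigenspace_neg_one {a b : E} (ha : a ∈ End.eigenspace σ.toLinearMap (-1))
    (hb : b ∈ End.eigenspace σ.toLinearMap 1) : a * b ∈ End.eigenspace σ.toLinearMap (-1) := by
  simp_all

theorem algHom_ext_of_eqOn_eigenspace_neg_one [Invertible (2 : K)] (hσ : Function.Involutive σ)
    {e : E} (he : e ∈ End.eigenspace σ.toLinearMap (-1)) (hunit : IsUnit e)
    {A : Type*} [CommRing A] [Algebra K A] {φ ψ : E →ₐ[K] A}
    (h : Set.EqOn φ ψ (End.eigenspace σ.toLinearMap (-1))) : φ = ψ := by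
  have hfix : Set.EqOn φ ψ (End.eigenspace σ.toLinearMap 1) := fun y hy => by
    have hey := h (mul_mem_eigenspace_neg_one he hy)
    rw [map_mul, map_mul, ← h he] at hey
    exact (hunit.map φ).mul_left_cancel hey
  exact AlgHom.toLinearMap_injective (LinearMap.ext_on_codisjoint
    (isCompl_eigenspace_of_involutive (f := σ.toLinearMap) hσ).codisjoint hfix h)

end SkewElements

section GeneralSkewElements

variable {K E : Type*} [Field K] [CommRing E] [Algebra K E] {σ : E →ₐ[K] E}

theorem exists_isUnit_mem_eigenspace_neg_one [Infinite K] [FiniteDimensional K E]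
    [Algebra.Etale K E]
    (hrank : finrank K (End.eigenspace σ.toLinearMap (-1)) =
      finrank K (End.eigenspace σ.toLinearMap 1)) :
    ∃ e ∈ End.eigenspace σ.toLinearMap (-1), IsUnit e := by
  let Ω := AlgebraicClosure K
  let ι := {φ : E →ₐ[K] Ω // ∃ x ∈ End.eigenspace σ.toLinearMap (-1), φ x ≠ 0}
  obtain ⟨e, he, hφe⟩ :=
    exists_mem_forall_apply_ne_zero _ (fun φ : ι => φ.1.toLinearMap) fun φ => φ.2
  let mulE := (LinearMap.mulLeft K e).restrict fun _ hy => mul_mem_eigenspace_one he hy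
  have hinj : Function.Injective mulE := by
    refine (injective_iff_map_eq_zero _).mpr fun y hy => Subtype.ext ?_
    have hey : e * y = 0 := congrArg Subtype.val hy
    refine eq_zero_of_forall_algHom_apply_eq_zero K Ω fun φ => by_contra fun hφy => ?_
    have hφ : φ e * φ y = 0 := by rw [← map_mul, hey, map_zero]
    exact mul_ne_zero (hφe ⟨φ, y, y.2, hφy⟩) hφy hφ
  obtain ⟨y, hy⟩ := (LinearMap.injective_iff_surjective_of_finrank_eq_finrank hrank).mp hinj
    ⟨1, mem_eigenspace_one.mpr (map_one σ)⟩
  exact ⟨e, he, IsUnit.of_mul_eq_one _ (congrArg Subtype.val hy)⟩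

variable {Ω : Type*} [Field Ω] [Algebra K Ω]

theorem exists_mem_eigenspace_neg_one_injective_eval [Infinite K] [Invertible (2 : K)]
    [FiniteDimensional K E] (hσ : Function.Involutive σ) {e : E}
    (he : e ∈ End.eigenspace σ.toLinearMap (-1)) (hunit : IsUnit e) :
    ∃ x ∈ End.eigenspace σ.toLinearMap (-1), Function.Injective fun φ : E →ₐ[K] Ω => φ x := by
  let ι := {p : (E →ₐ[K] Ω) × (E →ₐ[K] Ω) // p.1 ≠ p.2}
  obtain ⟨x, hx, hφx⟩ := exists_mem_forall_apply_ne_zero _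
    (fun p : ι => p.1.1.toLinearMap - p.1.2.toLinearMap) fun ⟨(φ, ψ), hne⟩ => by
      by_contra! heq
      exact hne (algHom_ext_of_eqOn_eigenspace_neg_one hσ he hunit fun y hy =>
        sub_eq_zero.mp (heq y hy))
  exact ⟨x, hx, fun φ ψ heq => by_contra fun hne => hφx ⟨(φ, ψ), hne⟩ (sub_eq_zero.mpr heq)⟩

theorem mem_nonZeroDivisors_of_injective_eval [Invertible (2 : K)] [IsSepClosed Ω]
    [Algebra.Etale K E] {e x : E} (he : e ∈ End.eigenspace σ.toLinearMap (-1)) (hunit : IsUnit e)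
    (hx : x ∈ End.eigenspace σ.toLinearMap (-1))
    (hinj : Function.Injective fun φ : E →ₐ[K] Ω => φ x) : x ∈ nonZeroDivisors E := by
  have hσe : σ e = -e := mem_eigenspace_neg_one.mp he
  have hσx : σ x = -x := mem_eigenspace_neg_one.mp hx
  have hne (φ : E →ₐ[K] Ω) : φ x ≠ 0 := fun hφx => by
    have hφσ : φ.comp σ = φ := hinj (by simp [hσx, hφx])
    have hneg : φ e = -φ e := by
      rw [← map_neg, ← hσe]
      exact (DFunLike.congr_fun hφσ e).symm
    exact (hunit.map φ).ne_zero (eq_zero_of_eq_neg_self K hneg)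
  refine mem_nonZeroDivisors_iff_right.mpr fun y hy =>
    eq_zero_of_forall_algHom_apply_eq_zero K Ω fun φ => ?_
  have hφ : φ y * φ x = 0 := by rw [← map_mul, hy, map_zero]
  exact (mul_eq_zero.mp hφ).resolve_right (hne φ)

theorem exists_powerBasis_gen_eq [FiniteDimensional K E]
    (hcard : finrank K E ≤ Nat.card (E →ₐ[K] Ω)) {x : E}
    (hinj : Function.Injective fun φ : E →ₐ[K] Ω => φ x) : ∃ pb : PowerBasis K E, pb.gen = x := by
  have hx : IsIntegral K x := .of_finite K x
  have hroot : Set.range (fun φ : E →ₐ[K] Ω => φ x) ⊆ (minpoly K x).rootSet Ω := by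
    rintro _ ⟨φ, rfl⟩
    exact Polynomial.mem_rootSet.mpr ⟨minpoly.ne_zero hx, by
      rw [Polynomial.aeval_algHom_apply, minpoly.aeval, map_zero]⟩
  have hdeg : (minpoly K x).natDegree = finrank K E := by
    refine le_antisymm ?_ ?_
    · simpa using (linearIndependent_pow (K := K) x).fintype_card_le_finrank
    · calc finrank K E ≤ Nat.card (E →ₐ[K] Ω) := hcard
        _ = (Set.range fun φ : E →ₐ[K] Ω => φ x).ncard := (Set.ncard_range_of_injective hinj).symm
        _ ≤ ((minpoly K x).rootSet Ω).ncard := Set.ncard_le_ncard hroot (Set.toFinite _)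
        _ ≤ (minpoly K x).natDegree := Polynomial.ncard_rootSet_le _ _
  have hspan := (linearIndependent_pow (K := K) x).span_eq_top_of_card_eq_finrank'
    (by rw [Fintype.card_fin, hdeg])
  exact ⟨⟨x, _, .mk (linearIndependent_pow x) hspan.ge, by simp⟩, rfl⟩

theorem exists_powerBasis_map_gen_eq_neg [Infinite K] [Invertible (2 : K)] [FiniteDimensional K E]
    [Algebra.Etale K E] (hσ : Function.Involutive σ)
    (hrank : finrank K (End.eigenspace σ.toLinearMap (-1)) =
      finrank K (End.eigenspace σ.toLinearMap 1)) :
    ∃ pb : PowerBasis K E, σ pb.gen = -pb.gen ∧ pb.gen ∈ nonZeroDivisors E := by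
  let Ω := AlgebraicClosure K
  obtain ⟨e, he, hunit⟩ := exists_isUnit_mem_eigenspace_neg_one hrank
  obtain ⟨x, hx, hinj⟩ := exists_mem_eigenspace_neg_one_injective_eval (Ω := Ω) hσ he hunit
  obtain ⟨pb, rfl⟩ := exists_powerBasis_gen_eq (natCard_algHom_eq_finrank K E Ω).ge hinj
  exact ⟨pb, mem_eigenspace_neg_one.mp hx, mem_nonZeroDivisors_of_injective_eval he hunit hx hinj⟩

end GeneralSkewElements

theorem trace_apply_of_involutive_s5 {K E : Type*} [CommRing K] [CommRing E] [Algebra K E]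
    {σ : E →ₐ[K] E} (hσ : Function.Involutive σ) (a : E) :
    Algebra.trace K E (σ a) = Algebra.trace K E a :=
  Algebra.trace_eq_of_algEquiv (AlgEquiv.ofAlgHom σ σ (AlgHom.ext hσ) (AlgHom.ext hσ)) a

theorem exists_isotropic_twistedForm_of_infinite {K E : Type*} [Field K] [Infinite K]
    [Invertible (2 : K)] [CommRing E] [Algebra K E] [FiniteDimensional K E] [Algebra.Etale K E]
    {σ : E →ₐ[K] E} (hσ : Function.Involutive σ)
    (hrank : finrank K (End.eigenspace σ.toLinearMap (-1)) =
      finrank K (End.eigenspace σ.toLinearMap 1)) {m : ℕ}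
    (hm : 2 * m < finrank K E) : ∃ s : E →ₗ[K] K, (∀ a, s (σ a) = s a) ∧ IsFrobeniusForm s ∧
      ∃ W : Submodule K E, finrank K W = m ∧ W ≤ (twistedForm σ s).orthogonal W := by
  have : Nontrivial E := Module.nontrivial_of_finrank_pos (R := K) (by omega)
  obtain ⟨pb, hgen, hreg⟩ := exists_powerBasis_map_gen_eq_neg hσ hrank
  have hadd := Submodule.finrank_add_eq_of_isCompl
    (isCompl_eigenspace_of_involutive (f := σ.toLinearMap) hσ)
  have heven : Even pb.dim := by
    rw [← pb.finrank, ← hadd, hrank]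
    exact Even.add_self _
  rw [pb.finrank] at hm
  exact ⟨topCoeff pb ∘ₗ LinearMap.mulLeft K pb.gen, topCoeff_gen_mul_map hgen heven,
    (isFrobeniusForm_topCoeff pb).comp_mulLeft hreg, _, finrank_span_gen_pow pb (by omega),
    span_gen_pow_le_orthogonal hgen hm⟩

/-- Let `K` be a field of characteristic `≠ 2`, `ℓ ≥ 1`, `E` a finite étale
commutative `K`-algebra of dimension `2ℓ`, and `σ` a `K`-linear algebra involution of `E` with
`dim_K E^σ = ℓ`.  Then there is a nondegenerate symmetric `K`-bilinear form `h` on `E` with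
`h (a * x) y = h x (σ a * y)` for all `a, x, y`, admitting a totally isotropic subspace of
dimension `ℓ - 1` (Witt index at least `ℓ - 1`). -/
theorem statement5 {K E : Type u} [Field K] [CommRing E] [Algebra K E]
    [FiniteDimensional K E] [Algebra.Etale K E]
    (hchar : ringChar K ≠ 2)
    (ℓ : ℕ) (hℓ : 1 ≤ ℓ)
    (hdim : Module.finrank K E = 2 * ℓ)
    (σ : E →ₐ[K] E) (hσ : ∀ x, σ (σ x) = x)
    (hfix : Module.finrank K (LinearMap.ker (σ.toLinearMap - LinearMap.id)) = ℓ) :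
    ∃ h : E →ₗ[K] E →ₗ[K] K,
      (∀ x : E, (∀ y : E, h x y = 0) → x = 0) ∧
      (∀ x y : E, h x y = h y x) ∧
      (∀ a x y : E, h (a * x) y = h x (σ a * y)) ∧
      ∃ W : Submodule K E, Module.finrank K W = ℓ - 1 ∧
        ∀ w ∈ W, ∀ w' ∈ W, h w w' = 0 := by
  have : Invertible (2 : K) := invertibleOfNonzero (Ring.two_ne_zero hchar)
  have hm : 2 * (ℓ - 1) < finrank K E := by omega
  have hrank : finrank K (End.eigenspace σ.toLinearMap (-1)) =
      finrank K (End.eigenspace σ.toLinearMap 1) := by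
    have hfix' : finrank K (End.eigenspace σ.toLinearMap 1) = ℓ := by
      rwa [End.eigenspace_def, one_smul]
    have hadd := Submodule.finrank_add_eq_of_isCompl
      (isCompl_eigenspace_of_involutive (f := σ.toLinearMap) hσ)
    omega
  obtain ⟨s, hs, hfrob, W, hW, hiso⟩ : ∃ s : E →ₗ[K] K, (∀ a, s (σ a) = s a) ∧
      IsFrobeniusForm s ∧ ∃ W : Submodule K E, finrank K W = ℓ - 1 ∧
        W ≤ (twistedForm σ s).orthogonal W := by
    cases finite_or_infinite K
    · have hs := trace_apply_of_involutive_s5 hσ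
      exact ⟨Algebra.trace K E, hs, isFrobeniusForm_trace K E,
        exists_finrank_eq_le_orthogonal (isSymm_twistedForm hσ hs).isRefl hm⟩
    · exact exists_isotropic_twistedForm_of_infinite hσ hrank hm
  exact ⟨twistedForm σ s, separatingLeft_twistedForm hσ hfrob, (isSymm_twistedForm hσ hs).eq,
    twistedForm_mul_left hσ, W, hW, fun w hw w' hw' => hiso hw' w hw⟩
end

section
/- Let K be a field of characteristic different from 2, let ℓ ≥ 1, let E be a finite étale commutative K-algebra of K-dimension 2ℓ, and let σ be a K-linear algebra involution of E with dim_K E^σ = ℓ. Let V be a 2ℓ-dimensional K-vector space and let f be a nondegenerate alternating K-bilinear form on V. Then there exists an injective K-algebra homomorphism ι : E → End_K(V) such that f(ι(a)x, y) = f(x, ι(σ(a))y) for all a ∈ E and x, y ∈ V. -/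
/-!
Since `E` is reduced, there is a `z` such that `u = σ z - z` divides every `σ x - x`; as the fixed
algebra has half the dimension of `E`, such a `u` is a unit. Let `s` be a linear functional on `E`
whose restriction to the fixed algebra is nondegenerate, which plays the role of the trace.
Then `(x, y) ↦ s (u * (x * σ y - σ x * y))` is a nondegenerate alternating form on `E` for which
multiplication by `a` is adjoint to multiplication by `σ a`. Nondegenerate alternating forms on
spaces of equal dimension are isometric, and an isometry from this form to `f` carries the regular
representation of `E` to the required embedding.
-/

open Module
open LinearMap (BilinForm)

section Symplectic

variable {K V W ι : Type*} [Field K] [AddCommGroup V] [Module K V] [AddCommGroup W] [Module K W]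
  {B : BilinForm K V}

/-- The vectors `p i`, `q i` have the Gram matrix of a symplectic basis with respect to `B`: they
form hyperbolic pairs that are orthogonal to each other. Spanning is not required. -/
structure IsSymplecticFamily [DecidableEq ι] (B : BilinForm K V) (p q : ι → V) : Prop where
  left_left : ∀ i j, B (p i) (p j) = 0
  right_right : ∀ i j, B (q i) (q j) = 0
  left_right : ∀ i j, B (p i) (q j) = if i = j then 1 else 0

namespace IsSymplecticFamily

theorem right_left [DecidableEq ι] {p q : ι → V} (h : IsSymplecticFamily B p q) (hB : B.IsAlt)
    (i j : ι) : B (q i) (p j) = -if j = i then 1 else 0 := by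
  rw [← hB.neg_eq, h.left_right]

theorem linearIndependent [Finite ι] [DecidableEq ι] {p q : ι → V}
    (h : IsSymplecticFamily B p q) (hB : B.IsAlt) : LinearIndependent K (Sum.elim p q) := by
  have := Fintype.ofFinite ι
  rw [Fintype.linearIndependent_iff]
  intro a ha
  simp only [Fintype.sum_sum_type, Sum.elim_inl, Sum.elim_inr] at ha
  rintro (i | i)
  · simpa [h.right_right, h.right_left hB] using congrArg (B (q i)) ha
  · simpa [h.left_left, h.left_right] using congrArg (B (p i)) ha

theorem cons {m : ℕ} {p q : Fin m → V} (h : IsSymplecticFamily B p q) (hB : B.IsAlt) {e d : V}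
    (hed : B e d = 1) (hp : ∀ i, B e (p i) = 0 ∧ B d (p i) = 0)
    (hq : ∀ i, B e (q i) = 0 ∧ B d (q i) = 0) :
    IsSymplecticFamily B (Fin.cons e p : Fin (m + 1) → V) (Fin.cons d q : Fin (m + 1) → V) where
  left_left i j := by
    cases i using Fin.cases <;> cases j using Fin.cases <;>
      simp [hB.self_eq_zero, h.left_left, hp, hB.eq_iff (y := e)]
  right_right i j := by
    cases i using Fin.cases <;> cases j using Fin.cases <;>
      simp [hB.self_eq_zero, h.right_right, hq, hB.eq_iff (y := d)]
  left_right i j := by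
    cases i using Fin.cases <;> cases j using Fin.cases <;>
      simp [hed, h.left_right, hp, hq, hB.eq_iff (y := d),
        Fin.succ_ne_zero, (Fin.succ_ne_zero _).symm]

end IsSymplecticFamily

theorem exists_apply_eq_one_of_ne_zero (hB : B ≠ 0) : ∃ e d, B e d = 1 := by
  obtain ⟨e, d, hed⟩ : ∃ e d, B e d ≠ 0 := by
    by_contra! h
    exact hB (LinearMap.ext₂ h)
  exact ⟨e, (B e d)⁻¹ • d, by simp [hed]⟩

theorem mem_orthogonal_span_pair {e d x : V} :
    x ∈ B.orthogonal (Submodule.span K {e, d}) ↔ B e x = 0 ∧ B d x = 0 := by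
  simp only [BilinForm.mem_orthogonal_iff, Submodule.mem_span_pair]
  refine ⟨fun h ↦ ⟨h e ⟨1, 0, by simp⟩, h d ⟨0, 1, by simp⟩⟩, ?_⟩
  rintro ⟨he, hd⟩ _ ⟨a, b, rfl⟩
  simp [he, hd]

theorem disjoint_span_pair_orthogonal (hB : B.IsAlt) {e d : V} (hed : B e d = 1) :
    Disjoint (Submodule.span K {e, d}) (B.orthogonal (Submodule.span K {e, d})) := by
  rw [Submodule.disjoint_def]
  intro x hx hx'
  obtain ⟨a, b, rfl⟩ := Submodule.mem_span_pair.1 hx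
  obtain ⟨he, hd⟩ := mem_orthogonal_span_pair.1 hx'
  have hde : B d e = -1 := by rw [← hB.neg_eq, hed]
  simp only [map_add, map_smul, hB.self_eq_zero, hed, hde, smul_eq_mul] at he hd
  simp_all

theorem finrank_span_pair (hB : B.IsAlt) {e d : V} (hed : B e d = 1) :
    finrank K (Submodule.span K {e, d}) = 2 := by
  have hfam : IsSymplecticFamily B (fun _ : Unit ↦ e) (fun _ ↦ d) := by
    constructor <;> simp [hB.self_eq_zero, hed]
  have h := finrank_span_eq_card (hfam.linearIndependent hB)
  rwa [Set.Sum.elim_range, Set.range_const, Set.range_const, Set.singleton_union] at h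

variable [FiniteDimensional K V] [FiniteDimensional K W]

theorem nondegenerate_restrict_orthogonal_span_pair (hB : B.IsAlt) (hB' : B.Nondegenerate)
    {e d : V} (hed : B e d = 1) :
    (B.restrict (B.orthogonal (Submodule.span K {e, d}))).Nondegenerate := by
  apply B.nondegenerate_restrict_of_disjoint_orthogonal hB.isRefl
  rw [BilinForm.orthogonal_orthogonal hB' hB.isRefl]
  exact (disjoint_span_pair_orthogonal hB hed).symm

theorem exists_isSymplecticFamily (hB : B.IsAlt) (hB' : B.Nondegenerate) :
    ∃ (m : ℕ) (p q : Fin m → V), finrank K V = 2 * m ∧ IsSymplecticFamily B p q := by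
  induction hn : finrank K V using Nat.strong_induction_on generalizing V with
  | _ n ih =>
    rcases subsingleton_or_nontrivial V with _ | _
    · exact ⟨0, 0, 0, by rw [← hn, finrank_zero_of_subsingleton], by constructor <;> simp⟩
    obtain ⟨e, d, hed⟩ := exists_apply_eq_one_of_ne_zero hB'.ne_zero
    set Q := B.orthogonal (Submodule.span K {e, d}) with hQ
    have hdim : finrank K Q = n - 2 := by
      rw [hQ, BilinForm.finrank_orthogonal hB', finrank_span_pair hB hed, hn]
    have htwo : 2 ≤ n := by
      rw [← hn, ← finrank_span_pair hB hed]
      exact Submodule.finrank_le _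
    obtain ⟨m, p, q, hm, hpq⟩ := ih (n - 2) (by lia) (B := B.restrict Q)
      (fun x ↦ hB.self_eq_zero x) (nondegenerate_restrict_orthogonal_span_pair hB hB' hed) hdim
    have hpq' : IsSymplecticFamily B (fun i ↦ (p i : V)) (fun i ↦ (q i : V)) :=
      ⟨hpq.left_left, hpq.right_right, hpq.left_right⟩
    exact ⟨m + 1, _, _, by lia, hpq'.cons hB hed
      (fun i ↦ mem_orthogonal_span_pair.1 (p i).2) (fun i ↦ mem_orthogonal_span_pair.1 (q i).2)⟩

theorem exists_basis_isSymplecticFamily (hB : B.IsAlt) (hB' : B.Nondegenerate) :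
    ∃ (m : ℕ) (b : Basis (Fin m ⊕ Fin m) K V),
      IsSymplecticFamily B (fun i ↦ b (.inl i)) (fun i ↦ b (.inr i)) := by
  obtain ⟨m, p, q, hV, hpq⟩ := exists_isSymplecticFamily hB hB'
  have hspan := (hpq.linearIndependent hB).span_eq_top_of_card_eq_finrank' (by simp; lia)
  exact ⟨m, Basis.mk (hpq.linearIndependent hB) hspan.ge, by simpa using hpq⟩

theorem equivalent_of_isAlt_of_nondegenerate {C : BilinForm K W} (hB : B.IsAlt)
    (hB' : B.Nondegenerate) (hC : C.IsAlt) (hC' : C.Nondegenerate)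
    (hdim : finrank K V = finrank K W) : B.Equivalent C := by
  obtain ⟨m, b, hb⟩ := exists_basis_isSymplecticFamily hB hB'
  obtain ⟨m', c, hc⟩ := exists_basis_isSymplecticFamily hC hC'
  have hm := finrank_eq_card_basis b
  have hm' := finrank_eq_card_basis c
  simp only [Fintype.card_sum, Fintype.card_fin] at hm hm'
  obtain rfl : m = m' := by lia
  let e : V ≃ₗ[K] W := b.equiv c (Equiv.refl _)
  have hgram : C.comp (e : V →ₗ[K] W) (e : V →ₗ[K] W) = B := by
    refine BilinForm.ext_basis b fun i j ↦ ?_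
    rcases i with i | i <;> rcases j with j | j <;>
      simp [e, hb.left_left, hb.right_right, hb.left_right, hb.right_left hB,
        hc.left_left, hc.right_right, hc.left_right, hc.right_left hC]
  exact ⟨{ e with map_app' := fun x y ↦ congr($hgram x y) }⟩

end Symplectic

section Reduced

theorem exists_mul_self_mul_eq_self {R : Type*} [CommRing R] [IsArtinianRing R] [IsReduced R]
    (u : R) : ∃ c, u * u * c = u := by
  have := IsArtinianRing.isSemisimpleRing_of_isReduced R
  obtain ⟨e, he, hspan⟩ := IsSemisimpleRing.ideal_eq_span_idempotent (Ideal.span {u})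
  obtain ⟨c, hc⟩ : u ∣ e := Ideal.mem_span_singleton.1 (hspan ▸ Ideal.mem_span_singleton_self e)
  obtain ⟨d, hd⟩ : e ∣ u := Ideal.mem_span_singleton.1 (hspan ▸ Ideal.mem_span_singleton_self u)
  refine ⟨c, ?_⟩
  calc u * u * c = u * e := by rw [hc, mul_assoc]
    _ = e * e * d := by rw [hd]; ring
    _ = u := by rw [he.eq, ← hd]

theorem exists_skew_mul_self_mul_eq_self {R : Type*} [CommRing R] [IsArtinianRing R] [IsReduced R]
    {σ : R →+* R} {u : R} (hu : σ u = -u) : ∃ c, σ c = -c ∧ u * u * c = u := by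
  obtain ⟨c, hc⟩ := exists_mul_self_mul_eq_self u
  have hσc : u * u * σ c = -u := by simpa [hu] using congrArg σ hc
  refine ⟨c * c * u, ?_, by linear_combination (u * c + 1) * hc⟩
  simp only [map_mul, hu]
  linear_combination (c * c - c * σ c) * hσc + (σ c * σ c - c * σ c) * hc

theorem exists_forall_map_sub_self_dvd {R : Type*} [CommRing R] [IsArtinianRing R] [IsReduced R]
    {σ : R →+* R} (hσ : Function.Involutive σ) : ∃ z, ∀ x, σ z - z ∣ σ x - x := by
  obtain ⟨z, -, hmax⟩ := exists_maximalFor_of_wellFoundedGT (fun _ : R ↦ True)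
    (fun z ↦ Ideal.span {σ z - z}) ⟨0, trivial⟩
  simp only [Ideal.span_singleton_le_span_singleton, forall_const] at hmax
  refine ⟨z, fun x ↦ ?_⟩
  obtain ⟨u, hu⟩ : ∃ u, σ z - z = u := ⟨_, rfl⟩
  have hσu : σ u = -u := by rw [← hu, map_sub, hσ z, neg_sub]
  obtain ⟨c, hσc, hc⟩ := exists_skew_mul_self_mul_eq_self hσu
  -- `1 - u * c` is the idempotent cutting out the factors where `u` vanishes, so replacing `z` by
  -- `z'` changes `u` only there and can only enlarge the ideal it generates.
  obtain ⟨z', hz'⟩ : ∃ z', z' = z + (1 - u * c) * x := ⟨_, rfl⟩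
  have hsub : σ z' - z' = u + (1 - u * c) * (σ x - x) := by
    simp only [hz', map_add, map_sub, map_mul, map_one, hσu, hσc]
    linear_combination hu
  have hdvd : σ z' - z' ∣ u := ⟨u * c, by
    rw [hsub]
    linear_combination (c * (σ x - x) - 1) * hc⟩
  have hdvd' : u ∣ (1 - u * c) * (σ x - x) := by
    simpa [hu, hsub] using hmax (j := z') (hu ▸ hdvd)
  rw [hu]
  have : σ x - x = (1 - u * c) * (σ x - x) + u * (c * (σ x - x)) := by ring
  exact this ▸ dvd_add hdvd' (dvd_mul_right _ _)

theorem exists_isUnit_map_sub_self {K E : Type*} [Field K] [CommRing E] [Algebra K E]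
    [FiniteDimensional K E] [IsReduced E] {σ : E →ₐ[K] E} (hσ : Function.Involutive σ)
    (hdim : finrank K E = 2 * finrank K (LinearMap.ker (σ.toLinearMap - LinearMap.id))) :
    ∃ z, IsUnit (σ z - z) := by
  have := IsArtinianRing.of_finite K E
  obtain ⟨z, hz⟩ := exists_forall_map_sub_self_dvd (σ := σ.toRingHom) hσ
  replace hz : ∀ x, σ z - z ∣ σ x - x := hz
  refine ⟨z, ?_⟩
  set u := σ z - z with hu
  have hσu : σ u = -u := by simp [hu, hσ z]
  obtain ⟨c, hσc, hc⟩ := exists_skew_mul_self_mul_eq_self (σ := σ.toRingHom) hσu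
  replace hσc : σ c = -c := hσc
  set F := LinearMap.ker (σ.toLinearMap - LinearMap.id) with hF
  have mem_F {x : E} : x ∈ F ↔ σ x = x := by simp [hF, sub_eq_zero]
  let M : F →ₗ[K] E := (LinearMap.mulLeft K u).domRestrict F
  have hrange : LinearMap.range (σ.toLinearMap - LinearMap.id) ≤ LinearMap.range M := by
    rintro _ ⟨x, rfl⟩
    obtain ⟨y, hy⟩ := hz x
    refine ⟨⟨c * (σ x - x), mem_F.2 (by simp only [map_mul, map_sub, hσc, hσ x]; ring)⟩, ?_⟩
    change u * (c * (σ x - x)) = σ x - x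
    rw [hy]
    linear_combination y * hc
  have hker : LinearMap.ker M = ⊥ := by
    have h₁ := LinearMap.finrank_range_add_finrank_ker M
    have h₂ := LinearMap.finrank_range_add_finrank_ker (σ.toLinearMap - LinearMap.id)
    rw [← hF] at h₂
    have h₃ := Submodule.finrank_mono hrange
    exact Submodule.finrank_eq_zero.1 (by lia)
  have hone : (⟨1 - u * c, mem_F.2 (by simp [hσu, hσc])⟩ : F) ∈ LinearMap.ker M := by
    change u * (1 - u * c) = 0
    linear_combination -hc
  rw [hker, Submodule.mem_bot, Submodule.mk_eq_zero, sub_eq_zero] at hone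
  exact .of_mul_eq_one c hone.symm

end Reduced

section Frobenius

variable {K A E : Type*} [Field K] [CommRing A] [Algebra K A] [CommRing E] [Algebra K E]

/-- A linear functional is nondegenerate if `(x, y) ↦ t (x * y)` is; as in the theory of Frobenius
algebras, this is what makes `t` a substitute for the trace. -/
def IsNondegenerateFunctional (t : A →ₗ[K] K) : Prop :=
  ∀ x, (∀ y, t (x * y) = 0) → x = 0

theorem exists_isNondegenerateFunctional_pi {ι : Type*} [Finite ι] (L : ι → Type*)
    [∀ i, Field (L i)] [∀ i, Algebra K (L i)] :
    ∃ t : (∀ i, L i) →ₗ[K] K, IsNondegenerateFunctional t := by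
  classical
  have := Fintype.ofFinite ι
  have hdual (i : ι) : ∃ f : L i →ₗ[K] K, f 1 ≠ 0 := by
    by_contra! h
    exact one_ne_zero ((forall_dual_apply_eq_zero_iff K (1 : L i)).1 h)
  choose f hf using hdual
  refine ⟨∑ i, f i ∘ₗ LinearMap.proj i, fun x hx ↦ funext fun i ↦ ?_⟩
  by_contra hxi
  have hmul : x * Pi.single i (x i)⁻¹ = Pi.single i 1 := by
    rw [← Pi.single_mul_right, mul_inv_cancel₀ hxi]
  have hsum : ∑ j, f j (Pi.single i 1 j) = f i 1 := by
    rw [Finset.sum_eq_single i (fun j _ hj ↦ by simp [Pi.single_eq_of_ne hj]) (by simp),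
      Pi.single_eq_same]
  apply hf i
  simpa [hmul, hsum] using hx (Pi.single i (x i)⁻¹)

theorem exists_isNondegenerateFunctional [IsArtinianRing A] [IsReduced A] :
    ∃ t : A →ₗ[K] K, IsNondegenerateFunctional t := by
  let _ (m : MaximalSpectrum A) : Field (A ⧸ m.asIdeal) := Ideal.Quotient.field m.asIdeal
  obtain ⟨t, ht⟩ := exists_isNondegenerateFunctional_pi (K := K)
    fun m : MaximalSpectrum A ↦ A ⧸ m.asIdeal
  let e := (IsArtinianRing.equivPi A).restrictScalars K
  refine ⟨t ∘ₗ e.toLinearMap, fun x hx ↦ e.injective ?_⟩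
  rw [map_zero]
  refine ht _ fun y ↦ ?_
  simpa using hx (e.symm y)

theorem exists_isNondegenerateFunctional_restrict [FiniteDimensional K E] [IsReduced E]
    (F : Subalgebra K E) :
    ∃ s : E →ₗ[K] K, IsNondegenerateFunctional (s ∘ₗ F.val.toLinearMap) := by
  have := IsArtinianRing.of_finite K F
  have := isReduced_of_injective F.val Subtype.val_injective
  obtain ⟨t, ht⟩ := exists_isNondegenerateFunctional (K := K) (A := F)
  obtain ⟨s, hs⟩ := t.exists_extend (p := Subalgebra.toSubmodule F)
  exact ⟨s, by rwa [← hs] at ht⟩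

/-- The alternating form on `E` attached to an involution `σ`, used to make multiplication by `a`
adjoint to multiplication by `σ a`. The factor `u` is meant to be skew: then the argument of `s` is
fixed by `σ`, so that only the restriction of `s` to the fixed algebra matters. -/
def involutionForm (σ : E →ₐ[K] E) (s : E →ₗ[K] K) (u : E) : BilinForm K E :=
  LinearMap.mk₂ K (fun x y ↦ s (u * (x * σ y - σ x * y)))
    (fun x x' y ↦ by rw [← map_add s, map_add σ]; ring_nf)
    (fun c x y ↦ by
      rw [map_smul σ, smul_mul_assoc, smul_mul_assoc, ← smul_sub, mul_smul_comm, map_smul])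
    (fun x y y' ↦ by rw [← map_add s, map_add σ]; ring_nf)
    (fun c x y ↦ by
      rw [map_smul σ, mul_smul_comm, mul_smul_comm, ← smul_sub, mul_smul_comm, map_smul])

variable {σ : E →ₐ[K] E} {s : E →ₗ[K] K} {u : E}

theorem involutionForm_apply (x y : E) :
    involutionForm σ s u x y = s (u * (x * σ y - σ x * y)) := rfl

theorem isAlt_involutionForm : (involutionForm σ s u).IsAlt := fun x ↦ by
  rw [involutionForm_apply, mul_comm x, sub_self, mul_zero, map_zero]

theorem isAdjointPair_involutionForm (hσ : Function.Involutive σ) (a : E) :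
    LinearMap.IsAdjointPair (involutionForm σ s u) (involutionForm σ s u) (a * ·) (σ a * ·) :=
  fun x y ↦ by
    simp only [involutionForm_apply, map_mul, hσ a]
    ring_nf

theorem nondegenerate_involutionForm (hσ : Function.Involutive σ)
    (hs : IsNondegenerateFunctional (s ∘ₗ (AlgHom.equalizer σ (.id K E)).val.toLinearMap))
    {z : E} (hz : IsUnit (σ z - z)) : (involutionForm σ s (σ z - z)).Nondegenerate := by
  have hrefl : LinearMap.IsRefl (involutionForm σ s (σ z - z)) := isAlt_involutionForm.isRefl
  refine hrefl.nondegenerate_iff_separatingLeft.2 ?_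
  intro x hx
  have hfixed (w : E) : x * w = σ (x * w) := by
    have hmem : (σ z - z) * (x * w - σ (x * w)) ∈ AlgHom.equalizer σ (.id K E) := by
      simp only [AlgHom.mem_equalizer, AlgHom.id_apply, map_mul, map_sub, hσ _]
      ring
    have hzero : (⟨_, hmem⟩ : AlgHom.equalizer σ (.id K E)) = 0 := hs _ fun ⟨c, hc⟩ ↦ by
      have hσc : σ c = c := hc
      rw [← hx (σ (w * c)), involutionForm_apply, hσ (w * c)]
      simp only [LinearMap.comp_apply, AlgHom.toLinearMap_apply, map_mul, Subalgebra.val_apply, hσc]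
      ring_nf
    exact sub_eq_zero.1 (hz.mul_right_eq_zero.1 (congrArg Subtype.val hzero))
  have hσx : σ x = x := by simpa using (hfixed 1).symm
  have hxz := hfixed z
  rw [map_mul, hσx] at hxz
  exact hz.mul_left_eq_zero.1 (by linear_combination -hxz)

end Frobenius

theorem statement6_general {K E V : Type*} [Field K] [CommRing E] [Algebra K E]
    [FiniteDimensional K E] [IsReduced E] [AddCommGroup V] [Module K V] [FiniteDimensional K V]
    {σ : E →ₐ[K] E} (hσ : Function.Involutive σ)
    (hfix : finrank K E = 2 * finrank K (LinearMap.ker (σ.toLinearMap - LinearMap.id)))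
    {f : BilinForm K V} (hf : f.IsAlt) (hf' : f.Nondegenerate)
    (hdim : finrank K E = finrank K V) :
    ∃ ι : E →ₐ[K] Module.End K V, Function.Injective ι ∧
      ∀ a, LinearMap.IsAdjointPair f f (ι a) (ι (σ a)) := by
  obtain ⟨z, hz⟩ := exists_isUnit_map_sub_self hσ hfix
  obtain ⟨s, hs⟩ := exists_isNondegenerateFunctional_restrict (AlgHom.equalizer σ (.id K E))
  obtain ⟨e⟩ := equivalent_of_isAlt_of_nondegenerate isAlt_involutionForm
    (nondegenerate_involutionForm hσ hs hz) hf hf' hdim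
  let φ := e.toLinearEquiv.conjAlgEquiv K
  let ι : E →ₐ[K] Module.End K V := φ.toAlgHom.comp (Algebra.lmul K E)
  have hι (a x : E) : ι a (e x) = e (a * x) :=
    congrArg (fun y ↦ e (a * y)) (e.toLinearEquiv.symm_apply_apply x)
  refine ⟨ι, φ.injective.comp Algebra.lmul_injective, fun a x y ↦ ?_⟩
  obtain ⟨x, rfl⟩ : ∃ x', e x' = x := e.toLinearEquiv.surjective x
  obtain ⟨y, rfl⟩ : ∃ y', e y' = y := e.toLinearEquiv.surjective y
  rw [hι, hι, e.map_app, e.map_app, isAdjointPair_involutionForm hσ]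

/-- Let `K` be a field of characteristic `≠ 2`, `ℓ ≥ 1`, `E` a finite étale
commutative `K`-algebra of dimension `2ℓ` with involution `σ` such that `dim_K E^σ = ℓ`.  Let `V`
be a `2ℓ`-dimensional `K`-vector space with a nondegenerate alternating bilinear form `f`.  Then
there is an injective `K`-algebra homomorphism `ι : E → End_K V` with
`f (ι a x) y = f x (ι (σ a) y)` for all `a ∈ E`, `x, y ∈ V`. -/
theorem statement6 {K E V : Type u} [Field K] [CommRing E] [Algebra K E]
    [FiniteDimensional K E] [Algebra.Etale K E]
    [AddCommGroup V] [Module K V] [FiniteDimensional K V]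
    (hchar : ringChar K ≠ 2)
    (ℓ : ℕ) (hℓ : 1 ≤ ℓ)
    (hdimE : Module.finrank K E = 2 * ℓ)
    (σ : E →ₐ[K] E) (hσ : ∀ x, σ (σ x) = x)
    (hfix : Module.finrank K (LinearMap.ker (σ.toLinearMap - LinearMap.id)) = ℓ)
    (hdimV : Module.finrank K V = 2 * ℓ)
    (f : V →ₗ[K] V →ₗ[K] K)
    (halt : ∀ x : V, f x x = 0)
    (hnd : ∀ x : V, (∀ y : V, f x y = 0) → x = 0) :
    ∃ ι : E →ₐ[K] Module.End K V, Function.Injective ι ∧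
      ∀ (a : E) (x y : V), f (ι a x) y = f x (ι (σ a) y) := by
  have := Algebra.FormallyUnramified.isReduced_of_field K E
  have hrefl : LinearMap.IsRefl f := LinearMap.IsAlt.isRefl halt
  exact statement6_general hσ (by rw [hfix, hdimE]) halt
    (hrefl.nondegenerate_iff_separatingLeft.2 hnd) (by rw [hdimE, hdimV])
end
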